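/- There exists a constant c > 0 such that for infinitely many natural numbers n there exist a finite tree (connected acyclic simple graph) T on n vertices with maximum degree at most 3·⌈√n⌉ and a walk w on T following the LFV-v policy whose cover time is at least n^(c·√n). (That is, LFV-v has worst-case exploration time n^Ω(√n), even on planar graphs of sublinear maximum degree; the witnessing graph is a caterpillar tree.) -/

import Mathlib

namespace LFV

/-- visit count -/
def cnt (w : ℕ → ℕ × ℕ) (t : ℕ) (x : ℕ × ℕ) : ℕ :=
  ((Finset.range (t + 1)).filter (fun s => w s = x)).card

lemma cnt_succ (w : ℕ → ℕ × ℕ) (t : ℕ) (x : ℕ × ℕ) :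
    cnt w (t + 1) x = cnt w t x + if w (t + 1) = x then 1 else 0 := by
  unfold cnt
  rw [Finset.range_add_one, Finset.filter_insert]
  split_ifs with h
  · rw [Finset.card_insert_of_notMem (by simp)]
  · rfl

lemma cnt_congr {w w' : ℕ → ℕ × ℕ} {t : ℕ} (h : ∀ s ≤ t, w s = w' s) (x : ℕ × ℕ) :
    cnt w t x = cnt w' t x := by
  unfold cnt
  congr 1
  apply Finset.filter_congr
  intro s hs
  rw [h s (by simpa [Nat.lt_succ_iff] using hs)]

/-- vertices of the caterpillar: `(i, 0)` is the spine, `(i, j)` with `1 ≤ j ≤ D + i` are the leaves -/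
def inS (D K : ℕ) (x : ℕ × ℕ) : Prop := x.1 ≤ K ∧ x.2 ≤ D + x.1

/-- adjacency of the caterpillar -/
def A (D K : ℕ) (x y : ℕ × ℕ) : Prop :=
  inS D K x ∧ inS D K y ∧
    ((x.2 = 0 ∧ y.2 = 0 ∧ (x.1 + 1 = y.1 ∨ y.1 + 1 = x.1)) ∨
     (x.1 = y.1 ∧ ((x.2 = 0 ∧ y.2 ≠ 0) ∨ (x.2 ≠ 0 ∧ y.2 = 0))))

lemma A_symm {D K : ℕ} {x y : ℕ × ℕ} (h : A D K x y) : A D K y x := by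
  unfold A at *
  grind

/-- one legal step condition -/
def Legal (D K : ℕ) (w : ℕ → ℕ × ℕ) (t : ℕ) : Prop :=
  A D K (w t) (w (t + 1)) ∧ ∀ u, A D K (w t) u → cnt w t (w (t + 1)) ≤ cnt w t u

lemma Legal_congr {D K : ℕ} {w w' : ℕ → ℕ × ℕ} {t : ℕ} (h : ∀ s ≤ t + 1, w s = w' s)
    (hl : Legal D K w t) : Legal D K w' t := by
  unfold Legal at *
  rw [← h t (by omega), ← h (t + 1) le_rfl]
  refine ⟨hl.1, fun u hu => ?_⟩
  rw [← cnt_congr (fun s hs => h s (by omega)), ← cnt_congr (fun s hs => h s (by omega))]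
  exact hl.2 u hu

/-- reachable configurations -/
def Reach (D K : ℕ) (c : ℕ × ℕ → ℕ) (x : ℕ × ℕ) : Prop :=
  ∃ (w : ℕ → ℕ × ℕ) (T : ℕ), (∀ t < T, Legal D K w t) ∧ w T = x ∧
    ∀ y, inS D K y → cnt w T y = c y

lemma Reach.congr {D K : ℕ} {c c' : ℕ × ℕ → ℕ} {x : ℕ × ℕ} (h : Reach D K c x)
    (hc : ∀ y, inS D K y → c y = c' y) : Reach D K c' x := by
  obtain ⟨w, T, h1, h2, h3⟩ := h
  exact ⟨w, T, h1, h2, fun y hy => (h3 y hy).trans (hc y hy)⟩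

lemma Reach.start {D K : ℕ} (x : ℕ × ℕ) :
    Reach D K (fun y => if x = y then 1 else 0) x := by
  refine ⟨fun _ => x, 0, by simp, rfl, fun y _ => ?_⟩
  unfold cnt
  by_cases h : x = y <;> simp [h]

lemma extend {D K : ℕ} {w : ℕ → ℕ × ℕ} {T : ℕ} {y : ℕ × ℕ} (h1 : ∀ t < T, Legal D K w t)
    (hA : A D K (w T) y) (hm : ∀ u, A D K (w T) u → cnt w T y ≤ cnt w T u) :
    ∀ t < T + 1, Legal D K (Function.update w (T + 1) y) t := by
  have hw : ∀ s ≤ T, w s = Function.update w (T + 1) y s := by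
    intro s hs
    rw [Function.update_of_ne (by omega)]
  intro t ht
  rcases Nat.lt_succ_iff_lt_or_eq.mp ht with h | rfl
  · exact Legal_congr (fun s hs => hw s (by omega)) (h1 t h)
  · unfold Legal
    rw [← hw t le_rfl, Function.update_self]
    refine ⟨hA, fun u hu => ?_⟩
    rw [← cnt_congr hw, ← cnt_congr hw]
    exact hm u hu

lemma Reach.step {D K : ℕ} {c c' : ℕ × ℕ → ℕ} {x y : ℕ × ℕ} (h : Reach D K c x)
    (hA : A D K x y) (hm : ∀ u, A D K x u → c y ≤ c u)
    (hc : ∀ z, inS D K z → c' z = c z + if y = z then 1 else 0) :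
    Reach D K c' y := by
  obtain ⟨w, T, h1, rfl, h3⟩ := h
  refine ⟨Function.update w (T + 1) y, T + 1, ?_, by simp, ?_⟩
  · apply extend h1 hA
    intro u hu
    rw [h3 _ hA.2.1, h3 _ hu.2.1]
    exact hm u hu
  · intro z hz
    rw [cnt_succ, Function.update_self, hc z hz, ← h3 z hz]
    congr 1
    apply cnt_congr
    intro s hs
    rw [Function.update_of_ne (by omega)]

/-- every vertex in range has a neighbour (`K ≥ 1`) -/
lemma exists_nbr {D K : ℕ} (hK : 1 ≤ K) {x : ℕ × ℕ} (hx : inS D K x) : ∃ y, A D K x y := by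
  obtain ⟨i, j⟩ := x
  by_cases hj : j = 0
  · by_cases hi : i = 0
    · exact ⟨(1, 0), by simp_all [A, inS]⟩
    · exact ⟨(i - 1, 0), by simp_all [A, inS]; omega⟩
  · exact ⟨(i, 0), by simp_all [A, inS]⟩

/-- a finite legal walk extends to an infinite legal walk -/
lemma infinite {D K : ℕ} (hK : 1 ≤ K) {w : ℕ → ℕ × ℕ} {T : ℕ} (h1 : ∀ t < T, Legal D K w t)
    (hx : inS D K (w T)) :
    ∃ w' : ℕ → ℕ × ℕ, (∀ s ≤ T, w' s = w s) ∧ ∀ t, Legal D K w' t := by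
  let P : ℕ → (ℕ → ℕ × ℕ) → Prop := fun n u =>
    (∀ t < T + n, Legal D K u t) ∧ inS D K (u (T + n))
  have key : ∀ n u, P n u → ∃ u', P (n + 1) u' ∧ ∀ s ≤ T + n, u' s = u s := by
    rintro n u ⟨hu, hin⟩
    obtain ⟨y, hy, hmin⟩ : ∃ y, A D K (u (T + n)) y ∧
        ∀ z, A D K (u (T + n)) z → cnt u (T + n) y ≤ cnt u (T + n) z := by
      have hne : {y | A D K (u (T + n)) y}.Nonempty := exists_nbr hK hin
      refine ⟨Function.argminOn (cnt u (T + n)) _ hne,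
        Function.argminOn_mem (cnt u (T + n)) _ hne, fun z hz => ?_⟩
      exact Function.argminOn_le (cnt u (T + n)) {y | A D K (u (T + n)) y} hz
    exact ⟨Function.update u (T + n + 1) y,
      ⟨extend hu hy hmin, by
        show inS D K (Function.update u (T + n + 1) y (T + n + 1))
        rw [Function.update_self]; exact hy.2.1⟩,
      fun s hs => Function.update_of_ne (by omega) _ _⟩
  choose! F hF1 hF2 using key
  let g : ℕ → (ℕ → ℕ × ℕ) := fun n => Nat.rec w (fun n u => F n u) n
  have hg0 : g 0 = w := rfl
  have hgs : ∀ n, g (n + 1) = F n (g n) := fun n => rfl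
  have hP : ∀ n, P n (g n) := by
    intro n
    induction n with
    | zero => exact ⟨h1, hx⟩
    | succ n ih => rw [hgs]; exact hF1 n _ ih
  have hagree : ∀ n m, ∀ s ≤ T + n, g (n + m) s = g n s := by
    intro n m s hs
    induction m with
    | zero => rfl
    | succ m ih =>
      rw [← ih, ← Nat.add_assoc, hgs]
      exact hF2 _ _ (hP _) s (by omega)
  have hw' : ∀ n, ∀ s ≤ n, g n s = g s s := by
    intro n s hs
    obtain ⟨m, rfl⟩ := Nat.exists_eq_add_of_le hs
    exact hagree s m s (by omega)
  refine ⟨fun s => g s s, ?_, ?_⟩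
  · intro s hs
    have := hagree 0 s s (by omega)
    rw [Nat.zero_add] at this
    exact this
  · intro t
    exact Legal_congr (fun s hs => hw' (t + 1) s hs) ((hP (t + 1)).1 t (by omega))

/-- macro configuration -/
def cfg (f L : ℕ → ℕ) (x : ℕ × ℕ) : ℕ := if x.2 = 0 then f x.1 else L x.1

/-- macro reachability: at spine vertex `i`, with spine counts `f` and leaf counts `L` -/
def MR (D K : ℕ) (f L : ℕ → ℕ) (i : ℕ) : Prop := Reach D K (cfg f L) (i, 0)

lemma MR.congr {D K : ℕ} {f L f' L' : ℕ → ℕ} {i : ℕ} (h : MR D K f L i)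
    (hf : ∀ k ≤ K, f k = f' k) (hL : ∀ k ≤ K, L k = L' k) : MR D K f' L' i := by
  apply Reach.congr h
  intro y hy
  unfold cfg
  rw [hf _ hy.1, hL _ hy.1]

lemma MR.right {D K : ℕ} {f L f' : ℕ → ℕ} {i : ℕ} (h : MR D K f L i) (hi : i < K)
    (h1 : f (i + 1) ≤ L i) (h2 : 1 ≤ i → f (i + 1) ≤ f (i - 1))
    (hf : ∀ k ≤ K, f' k = if k = i + 1 then f k + 1 else f k) : MR D K f' L (i + 1) := by
  apply Reach.step h
  · simp [A, inS]; omega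
  · rintro ⟨a, b⟩ ⟨-, -, hu⟩
    simp only [cfg] at *
    rcases hu with ⟨-, rfl, rfl | hh⟩ | ⟨rfl, hh⟩
    · simp
    · obtain rfl : a = i - 1 := by omega
      simpa using h2 (by omega)
    · have : b ≠ 0 := by omega
      simpa [this] using h1
  · rintro ⟨a, b⟩ ⟨hz, -⟩
    simp only [cfg, hf a hz, Prod.mk.injEq]
    grind

lemma MR.left {D K : ℕ} {f L f' : ℕ → ℕ} {i : ℕ} (h : MR D K f L (i + 1)) (hi : i + 1 ≤ K)
    (h1 : f i ≤ L (i + 1)) (h2 : i + 2 ≤ K → f i ≤ f (i + 2))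
    (hf : ∀ k ≤ K, f' k = if k = i then f k + 1 else f k) : MR D K f' L i := by
  apply Reach.step h
  · simp [A, inS]; omega
  · rintro ⟨a, b⟩ ⟨-, hin, hu⟩
    simp only [cfg, inS] at *
    rcases hu with ⟨-, rfl, rfl | hh⟩ | ⟨rfl, hh⟩
    · simpa using h2 hin.1
    · obtain rfl : a = i := by omega
      simp
    · have : b ≠ 0 := by omega
      simpa [this] using h1
  · rintro ⟨a, b⟩ ⟨hz, -⟩
    simp only [cfg, hf a hz, Prod.mk.injEq]
    grind

/-- raising all leaves of `i` by one -/
lemma MR.raise_one {D K : ℕ} {f L : ℕ → ℕ} {i : ℕ} (h : MR D K f L i) (hi : i ≤ K)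
    (h1 : 1 ≤ i → L i ≤ f (i - 1)) (h2 : i + 1 ≤ K → L i ≤ f (i + 1)) :
    MR D K (Function.update f i (f i + (D + i))) (Function.update L i (L i + 1)) i := by
  have key : ∀ q ≤ D + i, Reach D K (fun x => if x.2 = 0 then (if x.1 = i then f i + q else f x.1)
      else if x.1 = i ∧ x.2 ≤ q then L i + 1 else L x.1) (i, 0) := by
    intro q
    induction q with
    | zero =>
      intro _
      apply Reach.congr h
      rintro ⟨a, b⟩ -
      simp only [cfg]
      grind
    | succ q ih =>
      intro hq
      have ih := ih (by omega)
      have s1 : Reach D K (fun x => if x.2 = 0 then (if x.1 = i then f i + q else f x.1)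
          else if x.1 = i ∧ x.2 ≤ q + 1 then L i + 1 else L x.1) (i, q + 1) := by
        apply Reach.step ih
        · simp [A, inS]; omega
        · rintro ⟨a, b⟩ ⟨-, hin, hu⟩
          simp only [inS] at *
          rcases hu with ⟨-, rfl, rfl | hh⟩ | ⟨rfl, hh⟩
          · simpa using h2 hin.1
          · obtain rfl : a = i - 1 := by omega
            have h3 := h1 (by omega)
            have h4 : i - 1 ≠ i := by omega
            simpa [h4] using h3
          · grind
        · rintro ⟨a, b⟩ -
          simp only [Prod.mk.injEq]
          grind
      apply Reach.step s1
      · simp [A, inS]; omega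
      · rintro ⟨a, b⟩ ⟨-, -, hu⟩
        simp only at hu
        have : a = i ∧ b = 0 := by omega
        rw [this.1, this.2]
      · rintro ⟨a, b⟩ -
        simp only [Prod.mk.injEq]
        grind
  apply Reach.congr (key _ le_rfl)
  rintro ⟨a, b⟩ ⟨-, hb⟩
  simp only [cfg, Function.update_apply] at *
  grind

lemma MR.raise {D K : ℕ} {i : ℕ} (hi : i ≤ K) (m : ℕ) : ∀ {f L : ℕ → ℕ}, MR D K f L i →
    (1 ≤ i → L i + m ≤ f (i - 1) + 1) → (i + 1 ≤ K → L i + m ≤ f (i + 1) + 1) →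
    MR D K (Function.update f i (f i + (D + i) * m)) (Function.update L i (L i + m)) i := by
  induction m with
  | zero =>
    intro f L h h1 h2
    simpa using h
  | succ m ih =>
    intro f L h h1 h2
    have h3 := MR.raise_one h hi (fun h => by have := h1 h; omega) (fun h => by have := h2 h; omega)
    have h4 := ih h3
      (fun h => by
        have h5 := h1 h
        have : i - 1 ≠ i := by omega
        simp [this]; omega)
      (fun h => by
        have h5 := h2 h
        simp; omega)
    apply MR.congr h4
    · intro k _
      simp [Function.update_apply]
      split_ifs <;> ring
    · intro k _
      simp [Function.update_apply]
      split_ifs <;> ring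

/-- raise the leaves of `i` up to `M`, free-form version -/
lemma MR.raise' {D K : ℕ} {i M : ℕ} {f L f' L' : ℕ → ℕ} (h : MR D K f L i) (hi : i ≤ K)
    (hM : L i ≤ M) (h1 : 1 ≤ i → M ≤ f (i - 1) + 1) (h2 : i + 1 ≤ K → M ≤ f (i + 1) + 1)
    (hf : ∀ k ≤ K, f' k = if k = i then f k + (D + i) * (M - L i) else f k)
    (hL : ∀ k ≤ K, L' k = if k = i then M else L k) : MR D K f' L' i := by
  have := MR.raise hi (M - L i) h (fun h => by have := h1 h; omega)
    (fun h => by have := h2 h; omega)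
  apply MR.congr this
  · intro k hk
    rw [hf k hk, Function.update_apply]
    grind
  · intro k hk
    rw [hL k hk, Function.update_apply]
    grind

/-- spine counts after the right sweep -/
def rr (D : ℕ) (f L : ℕ → ℕ) (k : ℕ) : ℕ := f k + 1 + (D + k) * (f (k + 1) - L k)

/-- spine counts after the left sweep -/
def ff (D : ℕ) (f L : ℕ → ℕ) (p k : ℕ) : ℕ :=
  (if k < p then rr D f L k + 1 else f k + 1) +
    (D + k) * (rr D f L (k - 1) - (if k < p then f (k + 1) else L k))

lemma MR.rightSweep {D K p : ℕ} {f L : ℕ → ℕ} (hp : p + 1 ≤ K)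
    (h : MR D K (fun k => if k = 0 then f k + 1 else f k) L 0)
    (h1 : ∀ k < p, L k ≤ f (k + 1))
    (h2 : ∀ k, 1 ≤ k → k < p → f (k + 1) ≤ rr D f L (k - 1)) :
    ∀ j ≤ p, MR D K (fun k => if k < j then rr D f L k else if k = j then f k + 1 else f k)
      (fun k => if k < j then f (k + 1) else L k) j := by
  intro j
  induction j with
  | zero =>
    intro _
    apply MR.congr h
    · intro k _; simp
    · intro k _; simp
  | succ j ih =>
    intro hj
    have ih := ih (by omega)
    have hL := h1 j (by omega)
    have hr : 1 ≤ j → f (j + 1) ≤ rr D f L (j - 1) := fun h => h2 j h (by omega)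
    have s1 : MR D K (fun k => if k < j + 1 then rr D f L k else f k)
        (fun k => if k < j + 1 then f (k + 1) else L k) j := by
      apply MR.raise' (M := f (j + 1)) ih (by omega)
      · simpa using hL
      · intro h
        have := hr h
        have e : j - 1 < j := by omega
        simp only [e, if_true]; omega
      · intro _
        have e : ¬ (j + 1 < j) := by omega
        simp [e]
      · intro k _
        rcases lt_trichotomy k j with h | rfl | h
        · simp [h, h.ne, Nat.lt_succ_of_lt h]
        · simp [rr]
        · have e1 : ¬ k < j := by omega
          have e2 : ¬ k < j + 1 := by omega
          have e3 : k ≠ j := by omega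
          simp [e1, e2, e3]
      · intro k _
        grind
    apply MR.right s1 (by omega)
    · simp
    · intro h
      have := hr h
      have e : j - 1 < j + 1 := by omega
      simpa [e] using this
    · intro k _
      grind

lemma MR.leftSweep {D K p : ℕ} {f L : ℕ → ℕ} (hp : p + 1 ≤ K) (hp1 : 1 ≤ p)
    (h : MR D K (fun k => if k < p then rr D f L k else if k = p then f k + 1 else f k)
      (fun k => if k < p then f (k + 1) else L k) p)
    (h2 : ∀ k, 1 ≤ k → k < p → f (k + 1) ≤ rr D f L (k - 1))
    (h3 : L p ≤ rr D f L (p - 1)) (h4 : rr D f L (p - 1) ≤ f (p + 1))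
    (h5 : ∀ k, 1 ≤ k → k < p → rr D f L (k - 1) ≤ ff D f L p (k + 1)) :
    ∀ d ≤ p, MR D K
      (fun k => if k < p - d then rr D f L k else if k = p - d then
        (if k < p then rr D f L k + 1 else f k + 1) else if k ≤ p then ff D f L p k else f k)
      (fun k => if k ≤ p - d then (if k < p then f (k + 1) else L k) else
        if k ≤ p then rr D f L (k - 1) else L k) (p - d) := by
  intro d
  induction d with
  | zero =>
    intro _
    apply MR.congr h
    · intro k _; grind
    · intro k _; grind
  | succ d ih =>
    intro hd
    have ih := ih (by omega)
    obtain ⟨i, hi⟩ : ∃ i, p - d = i + 1 := ⟨p - d - 1, by omega⟩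
    have hi' : p - (d + 1) = i := by omega
    rw [hi] at ih
    rw [hi']
    have hip : i + 1 ≤ p := by omega
    have c1 : (if i + 1 < p then f (i + 1 + 1) else L (i + 1)) ≤ rr D f L i := by
      split_ifs with hh
      · exact h2 (i + 1) (by omega) hh
      · obtain rfl : p = i + 1 := by omega
        exact h3
    have c2 : rr D f L i ≤ if i + 2 ≤ p then ff D f L p (i + 2) else f (i + 2) := by
      split_ifs with hh
      · exact h5 (i + 1) (by omega) (by omega)
      · obtain rfl : p = i + 1 := by omega
        exact h4
    have s1 : MR D K (fun k => if k < i + 1 then rr D f L k else if k ≤ p then ff D f L p k else f k)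
        (fun k => if k ≤ i then (if k < p then f (k + 1) else L k) else
        if k ≤ p then rr D f L (k - 1) else L k) (i + 1) := by
      apply MR.raise' (M := rr D f L i) ih (by omega)
      · simpa using c1
      · intro _
        simp
      · intro _
        have e1 : ¬ (i + 1 + 1 < i + 1) := by omega
        have e2 : ¬ (i + 1 + 1 = i + 1) := by omega
        simp only [e1, e2, if_false]
        exact c2.trans (Nat.le_succ _)
      · intro k _
        rcases lt_trichotomy k (i + 1) with h | rfl | h
        · simp [h, h.ne]
        · simp [hip, ff]
        · have e1 : ¬ k < i + 1 := by omega
          have e3 : k ≠ i + 1 := by omega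
          simp [e1, e3]
      · intro k _
        grind
    apply MR.left s1 (by omega)
    · simp [hip]
    · intro _
      have e1 : ¬ (i + 2 < i + 1) := by omega
      simp only [e1, if_false]
      simpa using c2
    · intro k _
      grind

/-- one full sweep `0 → p → 0` -/
lemma MR.sweep {D K p : ℕ} {f L : ℕ → ℕ} (hp : p + 1 ≤ K) (hp1 : 1 ≤ p)
    (h : MR D K (fun k => if k = 0 then f k + 1 else f k) L 0)
    (h1 : ∀ k < p, L k ≤ f (k + 1))
    (h2 : ∀ k, 1 ≤ k → k < p → f (k + 1) ≤ rr D f L (k - 1))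
    (h3 : L p ≤ rr D f L (p - 1)) (h4 : rr D f L (p - 1) ≤ f (p + 1))
    (h5 : ∀ k, 1 ≤ k → k < p → rr D f L (k - 1) ≤ ff D f L p (k + 1)) :
    MR D K (fun k => if k = 0 then
        (if k = 0 then rr D f L 0 else if k ≤ p then ff D f L p k else f k) + 1
        else (if k = 0 then rr D f L 0 else if k ≤ p then ff D f L p k else f k))
      (fun k => if k = 0 then f 1 else if k ≤ p then rr D f L (k - 1) else L k) 0 := by
  have s := MR.leftSweep hp hp1 (MR.rightSweep hp h h1 h2 p le_rfl) h2 h3 h4 h5 p le_rfl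
  rw [Nat.sub_self] at s
  apply MR.congr s
  · intro k _; grind
  · intro k _; grind

/-- initial macro state -/
def f0 (D k : ℕ) : ℕ := if k = 0 then 0 else if k % 2 = 0 then D + k + 1 else 1
/-- initial macro state -/
def L0 (k : ℕ) : ℕ := if k = 0 then 0 else if k % 2 = 0 then 1 else 0

lemma MR.firstPass {D K : ℕ} (hK : K % 2 = 1) :
    ∀ d ≤ K, MR D K (fun k => if k < K - d then 0 else if k = K - d then 1 else f0 D k)
      (fun k => if k ≤ K - d then 0 else L0 k) (K - d) := by
  intro d
  induction d with
  | zero =>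
    intro _
    apply Reach.congr (Reach.start (K, 0))
    rintro ⟨a, b⟩ ⟨ha, -⟩
    simp only [cfg, Prod.mk.injEq] at *
    grind
  | succ d ih =>
    intro hd
    have ih := ih (by omega)
    obtain ⟨i, hi⟩ : ∃ i, K - d = i + 1 := ⟨K - d - 1, by omega⟩
    have hi' : K - (d + 1) = i := by omega
    rw [hi] at ih
    rw [hi']
    have s1 : MR D K (fun k => if k ≤ i then 0 else f0 D k) (fun k => if k ≤ i then 0 else L0 k)
        (i + 1) := by
      by_cases hpar : (i + 1) % 2 = 0
      · apply MR.raise' (M := 1) ih (by omega)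
        · simp
        · intro _; simp
        · intro _; simp
        · intro k _
          simp only [f0]
          grind
        · intro k _
          simp only [L0]
          grind
      · apply MR.congr ih
        · intro k _
          simp only [f0]
          grind
        · intro k _
          simp only [L0]
          grind
    apply MR.left s1 (by omega)
    · simp
    · intro _
      simp
    · intro k _
      grind

/-- invariant after `t` sweeps -/
structure Inv (D K t : ℕ) (f L : ℕ → ℕ) : Prop where
  reach : MR D K (fun k => if k = 0 then f k + 1 else f k) L 0
  lo : ∀ k, (D + k) * L k ≤ f k
  hi : ∀ k, f k ≤ (D + k) * L k + (2 * t + 1)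
  a : ∀ k < 2 * t + 1, L k ≤ f (k + 1)
  b : ∀ k, 1 ≤ k → k < 2 * t + 1 → D * (f (k + 1) + 2) ≤ (D + 4 * t) * f k
  uf : ∀ k, 2 * t ≤ k → f k = f0 D k
  uL : ∀ k, 2 * t ≤ k → L k = L0 k
  g : D ^ (2 * t) ≤ f 1

lemma Inv.zero {D K : ℕ} (hK : K % 2 = 1) : Inv D K 0 (f0 D) L0 where
  reach := by
    apply MR.congr (by simpa using MR.firstPass (D := D) hK K le_rfl)
    · intro k _
      simp only [f0]; grind
    · intro k _
      simp only [L0]; grind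
  lo := by intro k; simp only [f0, L0]; split_ifs <;> simp
  hi := by intro k; simp only [f0, L0]; split_ifs <;> simp
  a := by intro k hk; obtain rfl : k = 0 := by omega
          simp [L0]
  b := by intro k h1 h2; omega
  uf := fun _ _ => rfl
  uL := fun _ _ => rfl
  g := by simp [f0]

lemma arith1 {X R E H t : ℕ} (q1 : X ≤ (E + 2) * R + (2 * t + 3))
    (q2 : R ≤ (E + 1) * H + (2 * t + 2)) (hE : 4 * t + 4 ≤ E) (hE8 : 8 ≤ E) :
    X + 2 ≤ (E + 2) * ((E + 1) * (H + 2)) := by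
  have h1 : (E + 2) * R ≤ (E + 2) * ((E + 1) * H + (2 * t + 2)) := Nat.mul_le_mul_left _ q2
  have h2 : (E + 2) * (2 * t + 2) ≤ (E + 2) * (E + 1) := Nat.mul_le_mul_left _ (by omega)
  have h3 : (E + 2) * 1 ≤ (E + 2) * (E + 1) := Nat.mul_le_mul_left _ (by omega)
  have h4 : (E + 2) * ((E + 1) * (H + 2)) =
      (E + 2) * ((E + 1) * H) + 2 * ((E + 2) * (E + 1)) := by ring
  rw [Nat.mul_add] at h1
  omega

lemma arith2 {D E t : ℕ} (h : D ≤ E) (ht : 4 * t + 4 ≤ D) :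
    (D + 4 * t) * (E + 2) ≤ (D + 4 * (t + 1)) * E := by
  have h1 : (D + 4 * t) * (E + 2) = (D + 4 * t) * E + 2 * (D + 4 * t) := by ring
  have h2 : (D + 4 * (t + 1)) * E = (D + 4 * t) * E + 4 * E := by ring
  omega

set_option maxHeartbeats 1000000 in
lemma Inv.step {D K t : ℕ} {f L : ℕ → ℕ} (hI : Inv D K t f L) (hD : 8 ≤ D) (ht : 4 * t + 4 ≤ D)
    (hK : 2 * t + 2 ≤ K) : ∃ f' L', Inv D K (t + 1) f' L' := by
  obtain ⟨p, hp⟩ : ∃ p, p = 2 * t + 1 := ⟨_, rfl⟩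
  have hr_lo : ∀ k < p, (D + k) * f (k + 1) ≤ rr D f L k := by
    intro k hk
    obtain ⟨x, hx⟩ := Nat.exists_eq_add_of_le (hI.a k (by omega))
    have := hI.lo k
    simp only [rr, hx, Nat.add_sub_cancel_left]
    nlinarith
  have hr_ge : ∀ k, f k + 1 ≤ rr D f L k := fun k => Nat.le_add_right _ _
  have hr_hi : ∀ k < p, rr D f L k ≤ (D + k) * f (k + 1) + (2 * t + 2) := by
    intro k hk
    obtain ⟨x, hx⟩ := Nat.exists_eq_add_of_le (hI.a k (by omega))
    have := hI.hi k
    simp only [rr, hx, Nat.add_sub_cancel_left]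
    nlinarith
  have hfp : f p = 1 := by
    rw [hI.uf p (by omega)]; simp only [f0]; grind
  have hLp : L p = 0 := by
    rw [hI.uL p (by omega)]; simp only [L0]; grind
  have hfp1 : f (p + 1) = D + (p + 1) + 1 := by
    rw [hI.uf _ (by omega)]; simp only [f0]; grind
  have hLp1 : L (p + 1) = 1 := by
    rw [hI.uL _ (by omega)]; simp only [L0]; grind
  have hfp2 : f (p + 2) = 1 := by
    rw [hI.uf _ (by omega)]; simp only [f0]; grind
  have h2 : ∀ k, 1 ≤ k → k < p → f (k + 1) ≤ rr D f L (k - 1) := by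
    intro k h1 hk
    have hb := hI.b k h1 (by omega)
    have hr := hr_lo (k - 1) (by omega)
    rw [Nat.sub_add_cancel h1] at hr
    have e1 : f (k + 1) ≤ 2 * f k := by
      have : D * f (k + 1) ≤ D * (2 * f k) := by nlinarith [Nat.zero_le (f k)]
      exact Nat.le_of_mul_le_mul_left this (by omega)
    have e2 : 2 * f k ≤ (D + (k - 1)) * f k := Nat.mul_le_mul_right _ (by omega)
    omega
  have h4 : rr D f L (p - 1) ≤ f (p + 1) := by
    have hpp : p - 1 + 1 = p := by omega
    simp only [rr, hpp, hfp, hfp1]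
    rw [hI.uf (p - 1) (by omega), hI.uL (p - 1) (by omega)]
    by_cases h0 : p = 1
    · subst h0; simp [f0, L0]; omega
    · have e1 : p - 1 ≠ 0 := by omega
      have e2 : (p - 1) % 2 = 0 := by omega
      simp only [f0, L0, e1, e2, if_true, if_false]
      simp
  -- bounds for the new values
  have hff_lo : ∀ k, 1 ≤ k → k ≤ p → (D + k) * rr D f L (k - 1) ≤ ff D f L p k := by
    intro k h1 hk
    unfold ff
    by_cases hkp : k < p
    · simp only [hkp, if_true]
      obtain ⟨x, hx⟩ := Nat.exists_eq_add_of_le (h2 k h1 hkp)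
      have := hr_lo k hkp
      rw [hx, Nat.add_sub_cancel_left]
      nlinarith
    · obtain rfl : k = p := by omega
      simp [hLp]
  have hff_hi : ∀ k, 1 ≤ k → k ≤ p → ff D f L p k ≤ (D + k) * rr D f L (k - 1) + (2 * t + 3) := by
    intro k h1 hk
    unfold ff
    by_cases hkp : k < p
    · simp only [hkp, if_true]
      obtain ⟨x, hx⟩ := Nat.exists_eq_add_of_le (h2 k h1 hkp)
      have := hr_hi k hkp
      rw [hx, Nat.add_sub_cancel_left]
      nlinarith
    · obtain rfl : k = p := by omega
      simp [hLp, hfp]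
      omega
  have h5 : ∀ k, 1 ≤ k → k < p → rr D f L (k - 1) ≤ ff D f L p (k + 1) := by
    intro k h1 hk
    have e1 := hff_lo (k + 1) (by omega) (by omega)
    rw [Nat.add_sub_cancel] at e1
    have e2 := hr_hi (k - 1) (by omega)
    rw [Nat.sub_add_cancel h1] at e2
    have e3 := hr_ge k
    have e4 : (D + (k - 1)) * f k ≤ (D + (k + 1)) * f k := Nat.mul_le_mul_right _ (by omega)
    have e5 : (D + (k + 1)) * (f k + 1) ≤ (D + (k + 1)) * rr D f L k := Nat.mul_le_mul_left _ e3
    nlinarith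
  have hsweep := MR.sweep (p := p) (by omega) (by omega) hI.reach
    (fun k hk => hI.a k (by omega)) h2 (by rw [hLp]; exact Nat.zero_le _) h4 h5
  have hffg : ∀ k, k + 1 ≤ p →
      (D + (k + 1)) * ((D + k) * f (k + 1)) ≤ ff D f L p (k + 1) := by
    intro k hk
    refine le_trans (Nat.mul_le_mul_left _ (hr_lo k (by omega))) ?_
    simpa using hff_lo (k + 1) (by omega) hk
  refine ⟨_, _, hsweep, ?_, ?_, ?_, ?_, ?_, ?_, ?_⟩
  · intro k
    by_cases h0 : k = 0
    · subst h0
      simpa using hr_lo 0 (by omega)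
    by_cases hk : k ≤ p
    · simpa only [h0, hk, if_true, if_false] using hff_lo k (by omega) hk
    · simpa only [h0, hk, if_true, if_false] using hI.lo k
  · intro k
    by_cases h0 : k = 0
    · subst h0
      have := hr_hi 0 (by omega)
      simp at this ⊢
      omega
    by_cases hk : k ≤ p
    · have := hff_hi k (by omega) hk
      simp only [h0, hk, if_true, if_false]
      omega
    · have := hI.hi k
      simp only [h0, hk, if_false]
      omega
  · intro k hk
    by_cases h0 : k = 0
    · subst h0
      have h1p : 0 + 1 ≤ p := by omega
      have := hffg 0 h1p
      simp only [h1p, if_true]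
      simp at this ⊢
      nlinarith [Nat.zero_le (f 1), Nat.zero_le (D * f 1)]
    by_cases hkp : k < p
    · have e1 : k ≤ p := by omega
      have e2 : k + 1 ≤ p := by omega
      have e3 : k + 1 ≠ 0 := by omega
      simpa only [h0, e1, e2, e3, if_true, if_false] using h5 k (by omega) hkp
    by_cases hkp : k = p
    · subst hkp
      simpa [h0] using h4
    · obtain rfl : k = p + 1 := by omega
      have e1 : ¬ (p + 1 ≤ p) := by omega
      have e2 : ¬ (p + 1 + 1 ≤ p) := by omega
      have e3 : p + 1 + 1 ≠ 0 := by omega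
      simp only [h0, e1, e2, e3, if_false, hLp1]
      exact hfp2.ge
  · intro k h1 hk
    have h0 : k ≠ 0 := by omega
    have e3 : k + 1 ≠ 0 := by omega
    by_cases hkp : k < p
    · have e1 : k ≤ p := by omega
      have e2 : k + 1 ≤ p := by omega
      simp only [h0, e1, e2, e3, if_true, if_false]
      obtain ⟨m, rfl⟩ : ∃ m, k = m + 1 := ⟨k - 1, by omega⟩
      have q1 := hff_hi (m + 1 + 1) (by omega) e2
      rw [Nat.add_sub_cancel] at q1
      have q2 := hr_hi (m + 1) hkp
      have q3 := hffg m e1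
      have q4 := hI.b (m + 1) h1 (by omega)
      obtain ⟨F, hF⟩ : ∃ F, F = f (m + 1) := ⟨_, rfl⟩
      obtain ⟨H, hH⟩ : ∃ H, H = f (m + 1 + 1) := ⟨_, rfl⟩
      obtain ⟨E, hE⟩ : ∃ E, E = D + m := ⟨_, rfl⟩
      have E1 : D + (m + 1) = E + 1 := by omega
      have E2 : D + (m + 1 + 1) = E + 2 := by omega
      rw [← hF] at q3 q4
      rw [← hH] at q2 q4
      rw [E2] at q1
      rw [E1] at q2
      rw [E1, ← hE] at q3
      have r1 : ff D f L p (m + 1 + 1) + 2 ≤ (E + 2) * ((E + 1) * (H + 2)) :=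
        arith1 q1 q2 (by omega) (by omega)
      have r2 : (D + 4 * t) * (E + 2) ≤ (D + 4 * (t + 1)) * E := arith2 (by omega) (by omega)
      calc D * (ff D f L p (m + 1 + 1) + 2) ≤ D * ((E + 2) * ((E + 1) * (H + 2))) :=
            Nat.mul_le_mul_left _ r1
        _ = (E + 2) * (E + 1) * (D * (H + 2)) := by ring
        _ ≤ (E + 2) * (E + 1) * ((D + 4 * t) * F) := Nat.mul_le_mul_left _ q4
        _ = ((D + 4 * t) * (E + 2)) * ((E + 1) * F) := by ring
        _ ≤ ((D + 4 * (t + 1)) * E) * ((E + 1) * F) := Nat.mul_le_mul_right _ r2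
        _ = (D + 4 * (t + 1)) * ((E + 1) * (E * F)) := by ring
        _ ≤ _ := Nat.mul_le_mul_left _ q3
    by_cases hkp : k = p
    · subst hkp
      have e2 : ¬ (k + 1 ≤ k) := by omega
      simp only [h0, e2, e3, le_refl, if_true, if_false]
      obtain ⟨m, rfl⟩ : ∃ m, k = m + 1 := ⟨k - 1, by omega⟩
      have q3 := hffg m le_rfl
      rw [hfp] at q3
      rw [hfp1]
      apply Nat.mul_le_mul (by omega)
      refine le_trans ?_ q3
      nlinarith
    · obtain rfl : k = p + 1 := by omega
      have e1 : ¬ (p + 1 ≤ p) := by omega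
      have e2 : ¬ (p + 1 + 1 ≤ p) := by omega
      simp only [h0, e1, e2, e3, if_false, hfp1]
      rw [show p + 1 + 1 = p + 2 from rfl, hfp2]
      apply Nat.mul_le_mul (by omega)
      omega
  · intro k hk
    have h0 : k ≠ 0 := by omega
    have e1 : ¬ (k ≤ p) := by omega
    simp only [h0, e1, if_false]
    exact hI.uf k (by omega)
  · intro k hk
    have h0 : k ≠ 0 := by omega
    have e1 : ¬ (k ≤ p) := by omega
    simp only [h0, e1, if_false]
    exact hI.uL k (by omega)
  · have h1p : 0 + 1 ≤ p := by omega
    have q := hffg 0 h1p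
    have e1 : 1 ≤ p := by omega
    simp only [one_ne_zero, e1, if_true, if_false]
    simp only [zero_add, add_zero] at q
    calc D ^ (2 * (t + 1)) = D * (D * D ^ (2 * t)) := by ring
      _ ≤ (D + 1) * (D * f 1) :=
          Nat.mul_le_mul (by omega) (Nat.mul_le_mul_left _ hI.g)
      _ ≤ _ := q

lemma Inv.all {T : ℕ} (hT : 1 ≤ T) : ∀ t ≤ T, ∃ f L, Inv (8 * T) (2 * T + 1) t f L := by
  intro t
  induction t with
  | zero => exact fun _ => ⟨_, _, Inv.zero (by omega)⟩
  | succ t ih =>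
    intro h
    obtain ⟨f, L, hI⟩ := ih (by omega)
    exact hI.step (by omega) (by omega) (by omega)

/-- the walk on the caterpillar -/
lemma walk {T : ℕ} (hT : 1 ≤ T) : ∃ w : ℕ → ℕ × ℕ, (∀ t, Legal (8 * T) (2 * T + 1) w t) ∧
    ∀ t ≤ (8 * T) ^ (2 * T), w t ≠ (2 * T + 1, 1) := by
  obtain ⟨f, L, hI⟩ := Inv.all hT T le_rfl
  obtain ⟨w, N, h1, h2, h3⟩ := hI.reach
  obtain ⟨w', hw, hl⟩ := infinite (by omega) h1 (by rw [h2]; simp [inS])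
  refine ⟨w', hl, fun t ht heq => ?_⟩
  have c0 := h3 (0, 0) (by simp [inS])
  have c1 := h3 (1, 0) (by simp [inS])
  have c2 := h3 (2 * T + 1, 1) (by simp [inS]; omega)
  have g := hI.g
  simp [cfg] at c0 c1 c2
  have hN : cnt w N (0, 0) + cnt w N (1, 0) ≤ N + 1 := by
    unfold cnt
    rw [← Finset.card_union_of_disjoint]
    · refine (Finset.card_le_card (Finset.union_subset (Finset.filter_subset _ _)
        (Finset.filter_subset _ _))).trans (by simp)
    · rw [Finset.disjoint_filter]
      intro x _ h h'
      rw [h] at h'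
      simp at h'
  have htN : t ≤ N := by omega
  rw [hI.uL _ (by omega)] at c2
  have : L0 (2 * T + 1) = 0 := by simp only [L0]; grind
  rw [this] at c2
  unfold cnt at c2
  rw [Finset.card_eq_zero, Finset.filter_eq_empty_iff] at c2
  exact c2 (x := t) (by simp; omega) (by rw [← hw t htN]; exact heq)

end LFV
namespace LFV

/-- a graph given by a parent function is a tree -/
lemma tree_of_parent {V : Type*} [Finite V] (G : SimpleGraph V) (root : V) (par : V → V)
    (rank : V → ℕ) (h1 : ∀ v, v ≠ root → G.Adj v (par v) ∧ rank (par v) < rank v)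
    (h2 : ∀ u v, G.Adj u v → (u ≠ root ∧ v = par u) ∨ (v ≠ root ∧ u = par v)) : G.IsTree := by
  have hreach : ∀ k v, rank v ≤ k → G.Reachable v root := by
    intro k
    induction k with
    | zero =>
      intro v hv
      by_cases h : v = root
      · rw [h]
      · have := (h1 v h).2
        omega
    | succ k ih =>
      intro v hv
      by_cases h : v = root
      · rw [h]
      · exact (h1 v h).1.reachable.trans (ih _ (by have := (h1 v h).2; omega))
  have hconn : G.Connected := by
    have : Nonempty V := ⟨root⟩
    exact ⟨fun u v => (hreach _ u le_rfl).trans (hreach _ v le_rfl).symm⟩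
  rw [SimpleGraph.isTree_iff_connected_and_card]
  refine ⟨hconn, le_antisymm ?_ hconn.card_vert_le_card_edgeSet_add_one⟩
  have hsub : G.edgeSet ⊆ (fun v => s(v, par v)) '' {v | v ≠ root} := by
    intro e
    induction e using Sym2.ind with
    | _ u v =>
      intro he
      rcases h2 u v he with ⟨h, rfl⟩ | ⟨h, rfl⟩
      · exact ⟨u, h, rfl⟩
      · exact ⟨v, h, Sym2.eq_swap⟩
  have hle : G.edgeSet.ncard ≤ ({v | v ≠ root} : Set V).ncard :=
    (Set.ncard_le_ncard hsub (Set.toFinite _)).trans (Set.ncard_image_le (Set.toFinite _))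
  have hc : ({v | v ≠ root} : Set V).ncard + 1 = Nat.card V := by
    have := Set.ncard_add_ncard_compl ({root} : Set V)
    rw [Set.ncard_singleton] at this
    rw [← this, add_comm]
    rfl
  have : Nat.card G.edgeSet = G.edgeSet.ncard := rfl
  omega

/-- vertex set -/
def S (D K : ℕ) : Finset (ℕ × ℕ) :=
  (Finset.range (K + 1)).biUnion (fun i => (Finset.range (D + i + 1)).image (Prod.mk i))

lemma mem_S {D K : ℕ} {x : ℕ × ℕ} : x ∈ S D K ↔ inS D K x := by
  obtain ⟨i, j⟩ := x
  simp only [S, inS, Finset.mem_biUnion, Finset.mem_range, Finset.mem_image, Prod.mk.injEq]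
  grind

lemma card_S (D K : ℕ) : 2 * (S D K).card = (K + 1) * (2 * D + K + 2) := by
  unfold S
  rw [Finset.card_biUnion]
  · have : ∀ i, ((Finset.range (D + i + 1)).image (Prod.mk i)).card = D + i + 1 := by
      intro i
      rw [Finset.card_image_of_injective _ (Prod.mk_right_injective i), Finset.card_range]
    simp only [this]
    induction K with
    | zero => simp; ring
    | succ K ih => rw [Finset.sum_range_succ, mul_add, ih]; ring
  · intro i _ j _ hij
    rw [Function.onFun, Finset.disjoint_left]
    simp only [Finset.mem_image]
    rintro x ⟨a, -, rfl⟩ ⟨b, -, hb⟩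
    simp only [Prod.mk.injEq] at hb
    exact hij hb.1.symm

/-- the caterpillar -/
def H (D K : ℕ) : SimpleGraph (S D K) where
  Adj x y := A D K x y
  symm := ⟨fun _ _ h => A_symm h⟩
  loopless := ⟨fun x h => by
    rcases h.2.2 with ⟨_, _, h | h⟩ | ⟨_, h⟩ <;> omega⟩

/-- parent -/
def par (x : ℕ × ℕ) : ℕ × ℕ := if x.2 = 0 then (x.1 - 1, 0) else (x.1, 0)

lemma par_mem {D K : ℕ} (x : S D K) : par x ∈ S D K := by
  have := mem_S.mp x.2
  rw [mem_S]
  unfold par inS at *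
  split_ifs <;> simp <;> omega

lemma H_tree (D K : ℕ) : (H D K).IsTree := by
  apply tree_of_parent (H D K) ⟨(0, 0), mem_S.mpr (by simp [inS])⟩ (fun x => ⟨par x, par_mem x⟩)
    (fun x => x.1.1 + x.1.2)
  · rintro ⟨⟨i, j⟩, hx⟩ hne
    have hx' := mem_S.mp hx
    have hp := mem_S.mp (par_mem ⟨(i, j), hx⟩)
    have hij : ¬ (i = 0 ∧ j = 0) := by
      rintro ⟨rfl, rfl⟩; exact hne rfl
    refine ⟨⟨hx', hp, ?_⟩, ?_⟩
    · simp only [par]; grind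
    · simp only [par]; grind
  · rintro ⟨⟨i, j⟩, hx⟩ ⟨⟨k, l⟩, hy⟩ ⟨-, -, h⟩
    simp only [ne_eq, Subtype.mk.injEq, Prod.mk.injEq, par] at *
    grind

lemma H_degree (D K : ℕ) (v : S D K) : {u | (H D K).Adj v u}.ncard ≤ D + K + 3 := by
  classical
  let B : Finset (ℕ × ℕ) := {(v.1.1 - 1, 0), (v.1.1 + 1, 0)} ∪
    (Finset.range (D + K + 1)).image (Prod.mk v.1.1)
  have hB : B.card ≤ D + K + 3 := by
    refine (Finset.card_union_le _ _).trans ?_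
    have h1 : ({(v.1.1 - 1, 0), (v.1.1 + 1, 0)} : Finset (ℕ × ℕ)).card ≤ 2 := Finset.card_le_two
    have h2 : ((Finset.range (D + K + 1)).image (Prod.mk v.1.1)).card ≤ D + K + 1 :=
      Finset.card_image_le.trans (by simp)
    omega
  refine le_trans ?_ hB
  rw [← Set.ncard_coe_finset B, ← Set.ncard_image_of_injective _ Subtype.val_injective]
  apply Set.ncard_le_ncard _ (Finset.finite_toSet B)
  rintro _ ⟨⟨⟨k, l⟩, hy⟩, ⟨-, hk, h⟩, rfl⟩
  obtain ⟨⟨i, j⟩, hx⟩ := v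
  simp only [inS] at hk
  simp only at h
  simp only [B, Finset.coe_union, Finset.coe_insert, Finset.coe_singleton, Set.mem_union,
    Set.mem_insert_iff, Set.mem_singleton_iff, Prod.mk.injEq, Finset.coe_image, Set.mem_image,
    Finset.mem_coe, Finset.mem_range]
  rcases h with ⟨h1, rfl, h3 | h3⟩ | ⟨rfl, h⟩
  · left; right; omega
  · left; left; omega
  · right; exact ⟨l, by omega, rfl, rfl⟩

lemma ncard_eq_cnt (w : ℕ → ℕ × ℕ) (t : ℕ) (x : ℕ × ℕ) :
    {s : ℕ | s ≤ t ∧ w s = x}.ncard = cnt w t x := by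
  unfold cnt
  rw [← Set.ncard_coe_finset]
  congr 1
  ext s
  simp [Nat.lt_succ_iff]

end LFV

/-- There is a constant `c > 0` such that for infinitely many `n` there is a tree on `n`
vertices of maximum degree at most `3 * ⌈√n⌉` and a walk on it following the LFV-v policy
whose cover time is at least `n ^ (c * √n)`. -/
theorem lfv_v_superpolynomial_lower_bound :
    ∃ c : ℝ, 0 < c ∧
      ∀ N : ℕ, ∃ n : ℕ, N ≤ n ∧
        ∃ G : SimpleGraph (Fin n),
          -- `G` is a tree
          G.Connected ∧ G.IsAcyclic ∧
          -- maximum degree at most `3 * ⌈√n⌉`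
          (∀ v : Fin n, {u : Fin n | G.Adj v u}.ncard ≤ 3 * ⌈Real.sqrt n⌉₊) ∧
          ∃ w : ℕ → Fin n,
            -- `w` is a walk on `G`
            (∀ t : ℕ, G.Adj (w t) (w (t + 1))) ∧
            -- `w` follows the LFV-v policy
            (∀ t : ℕ, ∀ u : Fin n, G.Adj (w t) u →
              {t' : ℕ | t' ≤ t ∧ w t' = w (t + 1)}.ncard ≤
                {t' : ℕ | t' ≤ t ∧ w t' = u}.ncard) ∧
            -- the cover time of `w` is at least `n ^ (c * √n)`
            ∃ v : Fin n, ∀ t : ℕ, (t : ℝ) < (n : ℝ) ^ (c * Real.sqrt n) → w t ≠ v := by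
  refine ⟨1 / 7, by norm_num, fun N => ?_⟩
  obtain ⟨T, hT⟩ : ∃ T, T = N + 1 := ⟨_, rfl⟩
  obtain ⟨D, hD⟩ : ∃ D, D = 8 * T := ⟨_, rfl⟩
  obtain ⟨K, hK⟩ : ∃ K, K = 2 * T + 1 := ⟨_, rfl⟩
  obtain ⟨w, hw, hv⟩ := LFV.walk (T := T) (by omega)
  rw [← hD, ← hK] at hw hv
  obtain ⟨n, hn⟩ : ∃ n, n = (LFV.S D K).card := ⟨_, rfl⟩
  have hcard : n = (T + 1) * (18 * T + 3) := by
    have := LFV.card_S D K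
    rw [← hn] at this
    subst hD hK
    nlinarith
  have hn1 : (4 * T + 2) ^ 2 ≤ n := by rw [hcard]; nlinarith
  have hn2 : n ≤ (7 * T) ^ 2 := by rw [hcard]; nlinarith
  have hn3 : n ≤ (8 * T) ^ 2 := by rw [hcard]; nlinarith
  let e : LFV.S D K ≃ Fin n := (LFV.S D K).equivFinOfCardEq hn.symm
  let i : (LFV.H D K).comap e.symm ≃g LFV.H D K := SimpleGraph.Iso.comap e.symm (LFV.H D K)
  have htree := LFV.H_tree D K
  have hwS : ∀ t, w t ∈ LFV.S D K := fun t => LFV.mem_S.mpr (hw t).1.1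
  refine ⟨n, by nlinarith, (LFV.H D K).comap e.symm, i.connected_iff.mpr htree.connected,
    i.isAcyclic_iff.mpr htree.isAcyclic, ?_, fun t => e ⟨w t, hwS t⟩, ?_, ?_, ?_⟩
  · intro v
    have h1 := LFV.H_degree D K (e.symm v)
    have h2 : {u : Fin n | ((LFV.H D K).comap e.symm).Adj v u}.ncard
        = {u | (LFV.H D K).Adj (e.symm v) u}.ncard := by
      rw [← Set.ncard_image_of_injective _ e.symm.injective]
      congr 1
      ext u
      constructor
      · rintro ⟨x, hx, rfl⟩; exact hx
      · intro hu
        exact ⟨e u, by simpa using hu, by simp⟩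
    rw [h2]
    refine h1.trans ?_
    have h3 : ((4 * T + 2 : ℕ) : ℝ) ≤ Real.sqrt n := by
      apply Real.le_sqrt_of_sq_le
      exact_mod_cast hn1
    have h4 : 4 * T + 2 ≤ ⌈Real.sqrt n⌉₊ := by
      exact_mod_cast h3.trans (Nat.le_ceil _)
    omega
  · intro t
    simpa [LFV.H] using (hw t).1
  · intro t u hu
    have hc : ∀ x : LFV.S D K, {t' : ℕ | t' ≤ t ∧ e ⟨w t', hwS t'⟩ = e x}.ncard =
        LFV.cnt w t x := by
      intro x
      rw [← LFV.ncard_eq_cnt]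
      congr 1
      ext s
      simp [Subtype.ext_iff]
    have h2 := hc (e.symm u)
    rw [e.apply_symm_apply] at h2
    rw [h2, hc]
    apply (hw t).2
    simpa [LFV.H] using hu
  · refine ⟨e ⟨(K, 1), LFV.mem_S.mpr (by simp [LFV.inS]; omega)⟩, fun t ht => ?_⟩
    intro heq
    have heq' : w t = (K, 1) := by
      have := e.injective heq
      simpa using this
    refine hv t ?_ heq'
    have hT1 : (1 : ℝ) ≤ n := by
      have : 1 ≤ n := by nlinarith
      exact_mod_cast this
    have hs : Real.sqrt n ≤ 7 * T := by
      apply Real.sqrt_le_iff.mpr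
      exact ⟨by positivity, by exact_mod_cast hn2⟩
    have h1 : (n : ℝ) ^ (1 / 7 * Real.sqrt n) ≤ (n : ℝ) ^ (T : ℝ) := by
      apply Real.rpow_le_rpow_of_exponent_le hT1
      linarith
    rw [Real.rpow_natCast] at h1
    have h2 : n ^ T ≤ D ^ (2 * T) := by
      rw [pow_mul, hD]
      exact Nat.pow_le_pow_left hn3 T
    have h3 : (t : ℝ) < ((n ^ T : ℕ) : ℝ) := by
      push_cast
      exact lt_of_lt_of_le ht h1
    have h4 : t < n ^ T := by exact_mod_cast h3
    rw [← hD] at *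
    omega
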